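/- Let a_n = √(2 log n), c_n = log(√(4π log n)), t_n(x) = x - c_n, and let f_n(x) = n a_n^{-1} φ(a_n + t_n(x)/a_n) Φ(a_n + t_n(x)/a_n)^{n-1} be the density of the normalized maximum Y_n = a_n(X_{(n)} - b_n), where b_n = a_n - c_n/a_n. Then there exist C > 0 and N ∈ ℕ such that for all n ≥ N and all x ∈ [-(1/4) log log n, (log n)^{1/4}], f_n(x) = exp(-x - e^{-x}) (1 + e^{-x}(t_n(x)² + 2 t_n(x) + 2)/(4 log n) - t_n(x)²/(4 log n)) (1 + r_n(x)) with |r_n(x)| ≤ C t_n(x)⁴/(log n)^{3/2} (interpreting t_n(x)⁴/(log n)^{3/2} ≥ (log n)^{-3/2}). -/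

import Mathlib

open MeasureTheory Filter Real

/-- The standard normal cumulative distribution function. -/
noncomputable def stdNormalCDF (x : ℝ) : ℝ :=
  ∫ t in Set.Iic x, Real.exp (-t ^ 2 / 2) / Real.sqrt (2 * Real.pi)

/-- The standard normal density. -/
noncomputable def stdNormalPDF (x : ℝ) : ℝ :=
  Real.exp (-x ^ 2 / 2) / Real.sqrt (2 * Real.pi)

/-- Scaling constant `a_n = √(2 log n)`. -/
noncomputable def aSeq (n : ℕ) : ℝ := Real.sqrt (2 * Real.log n)

/-- Centering constant
`b_n = √(2 log n) - (log log n + log (4π)) / (2 √(2 log n))`. -/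
noncomputable def bSeq (n : ℕ) : ℝ :=
  aSeq n - (Real.log (Real.log n) + Real.log (4 * Real.pi)) / (2 * aSeq n)

/-- `c_n = log (√(4 π log n))`. -/
noncomputable def cSeq (n : ℕ) : ℝ := Real.log (Real.sqrt (4 * Real.pi * Real.log n))

/-- The CDF of `Y_n = a_n (X_{(n)} - b_n)` where `X_{(n)}` is the maximum of `n`
i.i.d. standard normal random variables: `P(Y_n ≤ x) = Φ(b_n + x/a_n)^n`. -/
noncomputable def Fmax (n : ℕ) (x : ℝ) : ℝ := stdNormalCDF (bSeq n + x / aSeq n) ^ n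

/-- The density of `Y_n = a_n (X_{(n)} - b_n)`:
`f_n(x) = n a_n⁻¹ φ(b_n + x/a_n) Φ(b_n + x/a_n)^{n-1}`. -/
noncomputable def fmax (n : ℕ) (x : ℝ) : ℝ :=
  n * (aSeq n)⁻¹ * stdNormalPDF (bSeq n + x / aSeq n) *
    stdNormalCDF (bSeq n + x / aSeq n) ^ (n - 1)

/-- The density of the standard Gumbel distribution. -/
noncomputable def gumbelPDF (x : ℝ) : ℝ := Real.exp (-x - Real.exp (-x))


lemma aux_pdf_integrable : Integrable stdNormalPDF := by
  have h := (integrable_exp_neg_mul_sq (b := 1/2) (by norm_num)).div_const (Real.sqrt (2 * Real.pi))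
  refine h.congr (Eventually.of_forall fun x => ?_)
  simp only [stdNormalPDF]; congr 2; ring

lemma aux_pdf_integral : ∫ x, stdNormalPDF x = 1 := by
  have h := integral_gaussian (1/2)
  have h2 : ∀ x : ℝ, stdNormalPDF x = Real.exp (-(1/2) * x^2) / Real.sqrt (2 * Real.pi) := by
    intro x; simp only [stdNormalPDF]; congr 2; ring
  simp_rw [h2]
  rw [integral_div, h]
  have : Real.pi / (1/2) = 2 * Real.pi := by ring
  rw [this]
  exact div_self (by positivity)

lemma aux_cdf (u : ℝ) : 1 - stdNormalCDF u = ∫ x in Set.Ioi u, stdNormalPDF x := by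
  have h := integral_add_compl (measurableSet_Iic (a := u)) aux_pdf_integrable
  rw [aux_pdf_integral, Set.compl_Iic] at h
  have : stdNormalCDF u = ∫ x in Set.Iic u, stdNormalPDF x := rfl
  rw [this]; linarith

lemma aux_pdf_deriv (u : ℝ) : HasDerivAt stdNormalPDF (-u * stdNormalPDF u) u := by
  have h1 : HasDerivAt (fun x : ℝ => -x^2/2) (-u) u := by
    refine (((hasDerivAt_pow 2 u).neg).div_const 2).congr_deriv ?_
    norm_num
    ring
  have h := h1.exp.div_const (Real.sqrt (2 * Real.pi))
  refine h.congr_deriv ?_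
  simp only [stdNormalPDF]; ring

lemma aux_pdf_tendsto : Tendsto stdNormalPDF atTop (nhds 0) := by
  have h : Tendsto (fun x : ℝ => Real.exp (-x^2/2)) atTop (nhds 0) := by
    apply Real.tendsto_exp_atBot.comp
    have : Tendsto (fun x : ℝ => x^2/2) atTop atTop :=
      (tendsto_pow_atTop (by norm_num)).atTop_div_const (by norm_num)
    refine (tendsto_neg_atTop_atBot.comp this).congr fun x => ?_
    simp only [Function.comp]; ring
  have := h.div_const (Real.sqrt (2 * Real.pi))
  rw [zero_div] at this
  exact this

lemma aux_pdf_pos (u : ℝ) : 0 < stdNormalPDF u := by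
  unfold stdNormalPDF; positivity

lemma aux_mills (u : ℝ) (hu : 2 ≤ u) (k : ℝ) (g' : ℝ → ℝ)
    (hg' : ∀ x, g' x = stdNormalPDF x * (1 + (k - 3) / x^4 + 5 * k / x^6))
    (hk : 0 ≤ k) :
    IntegrableOn g' (Set.Ioi u) ∧
    ∫ x in Set.Ioi u, g' x = stdNormalPDF u * (1/u - 1/u^3 + k/u^5) := by
  let g : ℝ → ℝ := fun x => - (stdNormalPDF x * (x⁻¹ - (x⁻¹)^3 + k * (x⁻¹)^5))
  have hd : ∀ x ∈ Set.Ici u, HasDerivAt g (g' x) x := by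
    intro x hx
    have hx0 : x ≠ 0 := by have : u ≤ x := hx; intro h; linarith
    have h1 := hasDerivAt_inv hx0
    have h2 := ((aux_pdf_deriv x).mul ((h1.sub (h1.pow 3)).add ((h1.pow 5).const_mul k))).neg
    refine h2.congr_deriv ?_
    rw [hg']
    simp only [Pi.add_apply, Pi.sub_apply, Pi.pow_apply]
    push_cast
    field_simp
    ring
  have hnn : ∀ x ∈ Set.Ioi u, 0 ≤ g' x := by
    intro x hx
    have hx2 : 2 ≤ x := by have : u < x := hx; linarith
    rw [hg']
    refine mul_nonneg (aux_pdf_pos x).le ?_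
    have h16 : (16:ℝ) ≤ x^4 := by
      calc (16:ℝ) = 2^4 := by norm_num
        _ ≤ x^4 := by gcongr
    have h3 : (3:ℝ)/x^4 ≤ 1 := by rw [div_le_one (by positivity)]; linarith
    have : 0 ≤ k / x^4 := by positivity
    have : 0 ≤ 5 * k / x^6 := by positivity
    rw [sub_div]; linarith
  have ht : Tendsto g atTop (nhds 0) := by
    have hi := tendsto_inv_atTop_zero (𝕜 := ℝ)
    have := (aux_pdf_tendsto.mul ((hi.sub (hi.pow 3)).add ((hi.pow 5).const_mul k))).neg
    simpa [g] using this
  refine ⟨integrableOn_Ioi_deriv_of_nonneg' hd hnn ht, ?_⟩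
  rw [integral_Ioi_of_hasDerivAt_of_nonneg' hd hnn ht]
  simp only [g]
  ring

lemma aux_mills' (u : ℝ) (hu : 2 ≤ u) : ∃ θ : ℝ, 0 ≤ θ ∧ θ ≤ 3 / u^4 ∧
    1 - stdNormalCDF u = stdNormalPDF u / u * (1 - 1/u^2 + θ) := by
  have hu0 : 0 < u := by linarith
  have hp := aux_pdf_pos u
  obtain ⟨i1, e1⟩ := aux_mills u hu 0 _ (fun x => rfl) le_rfl
  obtain ⟨i2, e2⟩ := aux_mills u hu 3 _ (fun x => rfl) (by norm_num)
  have l1 := setIntegral_mono_on i1 aux_pdf_integrable.integrableOn measurableSet_Ioi (by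
    intro x hx
    have hx0 : 0 < x := hu0.trans hx
    have := aux_pdf_pos x
    have h3 : 0 ≤ 3 / x^4 := by positivity
    have : (1 + (0 - 3) / x^4 + 5 * 0 / x^6) ≤ 1 := by
      rw [zero_sub, neg_div]; simp; positivity
    exact mul_le_of_le_one_right (by positivity) this)
  have l2 := setIntegral_mono_on aux_pdf_integrable.integrableOn i2 measurableSet_Ioi (by
    intro x hx
    have hx0 : 0 < x := hu0.trans hx
    have := aux_pdf_pos x
    have : 1 ≤ (1 + ((3:ℝ) - 3) / x^4 + 5 * 3 / x^6) := by
      simp; positivity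
    exact le_mul_of_one_le_right (by positivity) this)
  rw [e1, ← aux_cdf] at l1
  rw [e2, ← aux_cdf] at l2
  refine ⟨(1 - stdNormalCDF u) / (stdNormalPDF u / u) - (1 - 1/u^2), ?_, ?_, ?_⟩
  · rw [sub_nonneg, le_div_iff₀ (by positivity)]
    refine le_trans (le_of_eq ?_) l1
    field_simp; ring
  · rw [sub_le_iff_le_add, div_le_iff₀ (by positivity)]
    refine l2.trans (le_of_eq ?_)
    field_simp; ring
  · field_simp; ring

lemma aux_mul (P Q a b E1 E2 : ℝ) (ha : |a| ≤ 1) (h1 : |P - (1 - a)| ≤ E1)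
    (h2 : |Q - (1 - b)| ≤ E2) (hQ : |Q| ≤ 2) :
    |P * Q - (1 - (a + b))| ≤ 2 * E1 + 2 * E2 + |a| * |b| := by
  have e : P * Q - (1 - (a + b)) = (P - (1 - a)) * Q + (1 - a) * (Q - (1 - b)) + a * b := by ring
  rw [e]
  have h3 : |1 - a| ≤ 2 := by
    rw [abs_le] at *; constructor <;> linarith
  have n1 := abs_nonneg (P - (1 - a))
  have n2 := abs_nonneg (Q - (1 - b))
  calc _ ≤ |(P - (1 - a)) * Q| + |(1 - a) * (Q - (1 - b))| + |a * b| := abs_add_three _ _ _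
    _ ≤ _ := by
      simp only [abs_mul]
      have := mul_le_mul h1 hQ (abs_nonneg _) (n1.trans h1)
      have := mul_le_mul h3 h2 (abs_nonneg _) (by norm_num)
      linarith

/-- Combination of the three expansions. -/
lemma aux_ratio (B w v θ η : ℝ) (hη : η ≤ 1/16) (hB : 0 ≤ B) (hBη : B ≤ η) (hw : |w| ≤ η)
    (hv : 0 ≤ v) (hvη : v ≤ η) (hθ : 0 ≤ θ) (hθ2 : θ ≤ 3 * v^2 / (1+w)^4) :
    |Real.exp (-B) * (1 + w)⁻¹ * (1 - v / (1+w)^2 + θ) - (1 - (B + w + v))| ≤ 100 * η^2 := by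
  have hη0 : 0 ≤ η := hB.trans hBη
  obtain ⟨hw1, hw2⟩ := abs_le.1 hw
  have hwpos : 15/16 ≤ 1 + w := by linarith
  have hi : (1 + w)⁻¹ ≤ 16/15 := by
    rw [inv_le_comm₀ (by linarith) (by norm_num)]; linarith
  have hi0 : 0 < (1+w)⁻¹ := by positivity
  have hww : w^2 ≤ η^2 := by rw [← sq_abs w]; gcongr
  have hvv : v^2 ≤ η^2 := by gcongr
  have hBB : B^2 ≤ η^2 := by gcongr
  have e1 : |Real.exp (-B) - (1 - B)| ≤ η^2 := by
    have := Real.abs_exp_sub_one_sub_id_le (x := -B) (by rw [abs_neg, abs_of_nonneg hB]; linarith)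
    rw [neg_sq] at this
    have e : Real.exp (-B) - (1 - B) = Real.exp (-B) - 1 - -B := by ring
    rw [e]; linarith
  have e2 : |(1+w)⁻¹ - (1 - w)| ≤ 2 * η^2 := by
    have e : (1+w)⁻¹ - (1 - w) = w^2 * (1+w)⁻¹ := by field_simp; ring
    rw [e, abs_of_nonneg (by positivity)]
    nlinarith
  have e3 : |(1 - v / (1+w)^2 + θ) - (1 - v)| ≤ 8 * η^2 := by
    have e : (1 - v / (1+w)^2 + θ) - (1 - v) = v * w * ((2 + w) * ((1+w)⁻¹)^2) + θ := by
      field_simp; ring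
    rw [e]
    have hth : θ ≤ 4.5 * η^2 := by
      have : 3 * v^2 / (1+w)^4 = 3 * v^2 * ((1+w)⁻¹)^4 := by field_simp
      rw [this] at hθ2
      have : ((1+w)⁻¹)^4 ≤ (16/15)^4 := by gcongr
      have := mul_le_mul hvv this (by positivity) (by positivity)
      nlinarith
    have h2 : (2 + w) * ((1+w)⁻¹)^2 ≤ 3 := by
      have : ((1+w)⁻¹)^2 ≤ (16/15)^2 := by gcongr
      nlinarith
    have h20 : 0 ≤ (2 + w) * ((1+w)⁻¹)^2 := mul_nonneg (by linarith) (by positivity)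
    have h4 : |v * w| ≤ η^2 := by
      rw [abs_mul, abs_of_nonneg hv, sq]
      exact mul_le_mul hvη hw (abs_nonneg _) hη0
    calc _ ≤ |v * w * ((2 + w) * ((1+w)⁻¹)^2)| + |θ| := abs_add_le _ _
      _ ≤ η^2 * 3 + 4.5 * η^2 := by
        rw [abs_mul, abs_of_nonneg h20, abs_of_nonneg hθ]
        have := mul_le_mul h4 h2 h20 (by positivity)
        linarith
      _ ≤ _ := by nlinarith [sq_nonneg η]
  have hηη : η^2 ≤ 1/16 := by nlinarith
  have m1 := aux_mul _ _ B w _ _ (by rw [abs_of_nonneg hB]; linarith) e1 e2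
    (by rw [abs_of_pos hi0]; linarith)
  have m2 := aux_mul _ _ (B + w) v _ _ (by rw [abs_le]; constructor <;> linarith) m1 e3
    (by rw [abs_le] at e3 ⊢; constructor <;> linarith)
  have n1 : |B| * |w| ≤ η^2 := by
    rw [abs_of_nonneg hB, sq]; exact mul_le_mul hBη hw (abs_nonneg _) hη0
  have n2 : |B + w| * |v| ≤ 2 * η^2 := by
    rw [abs_of_nonneg hv]
    have : |B + w| ≤ 2 * η := by rw [abs_le]; constructor <;> linarith
    have := mul_le_mul this hvη hv (by linarith)
    nlinarith
  nlinarith [sq_nonneg η]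

lemma aux_log (p : ℝ) (h1 : p ≤ 1/2) : |Real.log (1 - p) + p| ≤ 2 * p^2 := by
  have hp : 0 < 1 - p := by linarith
  have u := Real.log_le_sub_one_of_pos hp
  have l := Real.one_sub_inv_le_log_of_pos hp
  have e : 1 - (1-p)⁻¹ = -p - p^2 * (1-p)⁻¹ := by field_simp; ring
  have hi : (1-p)⁻¹ ≤ 2 := by
    rw [inv_le_comm₀ hp (by norm_num)]; linarith
  have := mul_le_mul_of_nonneg_left hi (sq_nonneg p)
  rw [abs_le]; constructor <;> nlinarith

lemma aux_final (z G δ : ℝ) (hz : |z| ≤ 1/2) (hzz : z^2 ≤ δ) (hG : |G| ≤ 1) :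
    |Real.exp (z + G) / (1 + z) - 1| ≤ 2 * δ + 8 * |G| := by
  obtain ⟨z1, z2⟩ := abs_le.1 hz
  have hp : 0 < 1 + z := by linarith
  have e : Real.exp (z + G) / (1 + z) - 1 =
      ((Real.exp z - 1 - z) + Real.exp z * (Real.exp G - 1)) * (1+z)⁻¹ := by
    rw [Real.exp_add]; field_simp; ring
  have hi : (1+z)⁻¹ ≤ 2 := by
    rw [inv_le_comm₀ hp (by norm_num)]; linarith
  have h1 := Real.abs_exp_sub_one_sub_id_le (x := z) (by linarith)
  have h2 := Real.abs_exp_sub_one_le hG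
  have h3 : Real.exp z ≤ 2 := by
    have : z^2 ≤ 1/4 := by nlinarith
    have := (abs_le.1 h1).2
    linarith
  rw [e, abs_mul, abs_of_pos (inv_pos.2 hp)]
  have h4 : |(Real.exp z - 1 - z) + Real.exp z * (Real.exp G - 1)| ≤ δ + 4 * |G| := by
    refine (abs_add_le _ _).trans ?_
    rw [abs_mul, abs_of_pos (Real.exp_pos z)]
    have := mul_le_mul h3 h2 (abs_nonneg _) (by norm_num)
    linarith
  have := mul_le_mul h4 hi (by positivity) ((abs_nonneg _).trans h4)
  linarith

lemma aux_pow (n : ℕ) (hn : 1 ≤ n) (R Φ q : ℝ) (hq : 100 ≤ q) (hnq : 10 * q^8 ≤ n)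
    (hR : R = n * (1 - Φ)) (hR0 : 0 ≤ R) (hR2 : R ≤ 2 * q) :
    ∃ F : ℝ, |F| ≤ 2 / q^6 ∧ Φ ^ (n - 1) = Real.exp (-R + F) := by
  have hq0 : 0 < q := by linarith
  have hn0 : (0:ℝ) < n := by exact_mod_cast hn
  have hnq2 : 9 * q^2 / n ≤ 1 / q^6 := by
    rw [div_le_div_iff₀ hn0 (by positivity)]
    nlinarith [pow_pos hq0 8]
  have hn1 : (1:ℝ) ≤ n := by exact_mod_cast hn
  set p := R / n with hp
  have hΦ : Φ = 1 - p := by rw [hp, hR]; field_simp; ring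
  have hp0 : 0 ≤ p := by positivity
  have hpq : p ≤ 2 * q / n := by rw [hp]; gcongr
  have hp2 : p ≤ 2 * q^2 / n := by
    refine hpq.trans ?_
    gcongr; nlinarith
  have hq6 : 1 / q^6 ≤ 1 := by
    rw [div_le_one (by positivity)]
    exact one_le_pow₀ (by linarith)
  have hph : p ≤ 1/2 := by
    have : 2 * q^2 / n ≤ 9 * q^2/n * (2/9) := le_of_eq (by ring)
    nlinarith
  have hnp2 : n * p^2 ≤ 4 * q^2 / n := by
    have : (n:ℝ) * p^2 = R^2 / n := by rw [hp]; field_simp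
    rw [this]
    gcongr
    nlinarith
  have hpp : p^2 ≤ 4 * q^2/n := by nlinarith [sq_nonneg p]
  have hl := aux_log p hph
  refine ⟨n * (Real.log (1 - p) + p) - Real.log (1 - p), ?_, ?_⟩
  · have e : n * (Real.log (1 - p) + p) - Real.log (1 - p) =
      n * (Real.log (1 - p) + p) + p - (Real.log (1 - p) + p) := by ring
    rw [e]
    obtain ⟨l1, l2⟩ := abs_le.1 hl
    have k1 := mul_le_mul_of_nonneg_left l1 hn0.le
    have k2 := mul_le_mul_of_nonneg_left l2 hn0.le
    have e1 : 9 * q^2 / (n:ℝ) = 9 * (q^2 / n) := by ring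
    have e2 : 4 * q^2 / (n:ℝ) = 4 * (q^2 / n) := by ring
    have e3 : 2 * q^2 / (n:ℝ) = 2 * (q^2 / n) := by ring
    have e4 : 2 / q^6 = 2 * (1 / q^6) := by ring
    rw [e1] at hnq2
    rw [e2] at hnp2 hpp
    rw [e3] at hp2
    rw [e4]
    rw [abs_le]; constructor <;> nlinarith
  · have hpos : 0 < 1 - p := by linarith
    have e : -R + (n * (Real.log (1 - p) + p) - Real.log (1 - p)) =
        ((n - 1 : ℕ) : ℝ) * Real.log (1 - p) := by
      rw [Nat.cast_sub hn, hp]; field_simp; push_cast; ring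
    rw [e, hΦ, mul_comm, Real.exp_mul, Real.exp_log hpos, Real.rpow_natCast]

set_option maxHeartbeats 2000000 in
lemma aux_core (n : ℕ) (hn : 1 ≤ n) (q x c a s t : ℝ) (hq : 100 ≤ q) (hnq : (n:ℝ) = Real.exp (q^4))
    (hc0 : 0 ≤ c) (hcq : c ≤ q) (hc : Real.exp c = a * Real.sqrt (2 * Real.pi))
    (ha : 0 < a) (ha2 : a^2 = 2 * q^4) (hx1 : -Real.log q ≤ x) (hx2 : x ≤ q)
    (ht : t = x - c) (hs : s = max 1 |t|) :
    ∃ r : ℝ,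
      (n : ℝ) * a⁻¹ * stdNormalPDF (a + t / a) * stdNormalCDF (a + t / a) ^ (n - 1) =
        Real.exp (-x - Real.exp (-x)) *
          (1 + Real.exp (-x) * (t ^ 2 + 2 * t + 2) / (4 * q^4) - t ^ 2 / (4 * q^4)) * (1 + r) ∧
      |r| ≤ 1000 * (s^4 / q^6) := by
  have hq0 : 0 < q := by linarith
  have hlq : Real.log q ≤ q := (Real.log_le_sub_one_of_pos hq0).trans (by linarith)
  have htq : |t| ≤ 2 * q := by rw [ht, abs_le]; constructor <;> linarith
  have hs1 : 1 ≤ s := hs ▸ le_max_left _ _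
  have hst : |t| ≤ s := hs ▸ le_max_right _ _
  have hsq : s ≤ 2 * q := hs ▸ max_le (by linarith) htq
  have htt : t^2 ≤ s^2 := by rw [← sq_abs t]; gcongr
  have hss : 1 ≤ s^2 := one_le_pow₀ hs1
  have hsss : s ≤ s^2 := by nlinarith
  set e := Real.exp (-x) with he
  have he0 : 0 < e := Real.exp_pos _
  have heq : e ≤ q := by
    rw [he, ← Real.exp_log hq0]; apply Real.exp_le_exp.2; linarith
  set B := t^2 / (4 * q^4) with hB
  set w := t / (2 * q^4) with hw
  set v := 1 / (2 * q^4) with hv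
  set η := s^2 / q^4 with hη
  have hη0 : 0 < η := by positivity
  have hηq : η ≤ 4 / q^2 := by
    rw [hη, div_le_div_iff₀ (by positivity) (by positivity)]
    have : s^2 ≤ (2*q)^2 := by gcongr
    nlinarith [pow_pos hq0 2]
  have hq2 : 10000 ≤ q^2 := by nlinarith
  have hηs : η ≤ 4 / 10000 := hηq.trans (by gcongr)
  have hB0 : 0 ≤ B := by positivity
  have hBη : B ≤ η := by
    rw [hB, hη]; gcongr
    linarith [pow_pos hq0 4]
  have hwη : |w| ≤ η := by
    rw [hw, hη, abs_div, abs_of_pos (by positivity : 0 < 2 * q^4)]; gcongr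
    · linarith
    linarith [pow_pos hq0 4]
  have hv0 : 0 ≤ v := by positivity
  have hvη : v ≤ η := by
    rw [hv, hη]; gcongr
    linarith [pow_pos hq0 4]
  obtain ⟨hw1, hw2⟩ := abs_le.1 hwη
  have h1w : 15/16 ≤ 1 + w := by linarith
  have h1w0 : 0 < 1 + w := by linarith
  set u := a + t / a with hu
  have hua : u = a * (1 + w) := by
    rw [hu, hw, ← ha2]; field_simp
  have haq : 4 ≤ a := by
    by_contra h
    have : a^2 < 16 := by nlinarith
    nlinarith
  have hu2 : 2 ≤ u := by rw [hua]; nlinarith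
  have hu0 : 0 < u := by linarith
  obtain ⟨θ, hθ0, hθ1, hmills⟩ := aux_mills' u hu2
  have huu : 1 / u^2 = v / (1+w)^2 := by
    rw [hua, mul_pow, ha2, hv]; field_simp
  have huuuu : 3 / u^4 = 3 * v^2 / (1+w)^4 := by
    have : 3 / u^4 = 3 * (1/u^2)^2 := by field_simp
    rw [this, huu]; field_simp
  rw [huuuu] at hθ1
  rw [huu] at hmills
  have hratio := aux_ratio B w v θ η (by linarith) hB0 hBη hwη hv0 hvη hθ0 hθ1
  set m := Real.exp (-B) * (1 + w)⁻¹ * (1 - v / (1+w)^2 + θ) with hm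
  -- the exact density factor
  have hphi : (n : ℝ) * a⁻¹ * stdNormalPDF u = e * Real.exp (-B) := by
    have h1 : -u^2/2 = -q^4 - t - B := by
      have : u^2 = a^2 + 2 * t + t^2/a^2 := by rw [hu]; field_simp; ring
      rw [this, ha2, hB]; field_simp; ring
    rw [stdNormalPDF, h1, hnq]
    have h2 : Real.exp (-q^4 - t - B) = (Real.exp (q^4))⁻¹ * (e * Real.exp c) * Real.exp (-B) := by
      rw [he, ← Real.exp_neg, ← Real.exp_add, ← Real.exp_add, ← Real.exp_add, ht]; congr 1; ring
    rw [h2, hc]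
    have h3 : 0 < Real.sqrt (2 * Real.pi) := by positivity
    have h4 := Real.exp_pos (q^4)
    field_simp
  have hRm : n * (1 - stdNormalCDF u) = e * m := by
    rw [hmills, hm]
    have : (n:ℝ) * (stdNormalPDF u / u * (1 - v / (1 + w) ^ 2 + θ)) =
      (n * a⁻¹ * stdNormalPDF u) * ((1 + w)⁻¹ * (1 - v / (1 + w) ^ 2 + θ)) := by
      rw [hua]; field_simp
    rw [this, hphi]; ring
  have hR0 : 0 ≤ e * m := by
    rw [← hRm, aux_cdf]
    exact mul_nonneg (by positivity) (setIntegral_nonneg measurableSet_Ioi fun x _ => (aux_pdf_pos x).le)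
  have hηη : η^2 ≤ η * (4/10000) := by rw [sq]; gcongr
  obtain ⟨hr1, hr2⟩ := abs_le.1 hratio
  have hm2 : m ≤ 2 := by linarith
  have hR2 : e * m ≤ 2 * q := by
    calc e * m ≤ e * 2 := by gcongr
      _ ≤ 2 * q := by linarith
  have hnbig : 10 * q^8 ≤ n := by
    rw [hnq]
    have h := Real.pow_div_factorial_le_exp (q^4) (by positivity) 3
    refine le_trans ?_ h
    have : (q^4)^3 = q^8 * q^4 := by ring
    rw [this]
    have h60 : 60 ≤ q^4 := by
      have : (100:ℝ)^4 ≤ q^4 := by gcongr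
      linarith
    simp only [Nat.factorial]
    norm_num
    have h61 : q^8 * 60 ≤ q^8 * q^4 := by gcongr
    linarith
  obtain ⟨F, hF, hpow⟩ := aux_pow n hn (e * m) (stdNormalCDF u) q hq hnbig hRm.symm hR0 hR2
  set δ := s^4 / q^6 with hδ
  have hδ0 : 0 < δ := by positivity
  have hFδ : |F| ≤ 2 * δ := by
    refine hF.trans ?_
    rw [hδ, ← mul_div_assoc]
    have : 1 ≤ s^4 := one_le_pow₀ hs1
    gcongr; linarith
  have hqη : q^2 * η^2 = δ := by rw [hη, hδ]; field_simp
  have hδs : δ ≤ 16 / 10000 := by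
    have : δ = (q * η)^2 := by rw [← hqη]; ring
    have h2 : q * η ≤ 4 / q := by
      calc q * η ≤ q * (4 / q^2) := by gcongr
        _ = 4 / q := by field_simp
    have h3 : 4 / q ≤ 4 / 100 := by gcongr
    have h4 : 0 ≤ q * η := by positivity
    rw [this]
    calc (q * η)^2 ≤ (4/100)^2 := by gcongr; exact h2.trans h3
      _ = 16 / 10000 := by norm_num
  have hE : |e * (1 - (B + w + v)) - e * m| ≤ 100 * δ := by
    rw [← mul_sub, abs_mul, abs_of_pos he0, abs_sub_comm, ← hqη]
    have h1 := mul_le_mul heq hratio (abs_nonneg _) hq0.le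
    have h2 : q * (100 * η^2) ≤ q^2 * (100 * η^2) := by
      gcongr; exact le_self_pow₀ (by linarith) (by norm_num)
    linarith
  set A := e * (t^2 + 2 * t + 2) / (4 * q^4) with hA
  have hAe : A = e * (B + w + v) := by rw [hA, hB, hw, hv]; field_simp; ring
  set G := e * (1 - (B + w + v)) - e * m + F with hG
  have hGδ : |G| ≤ 102 * δ := (abs_add_le _ _).trans (by linarith)
  have hzb : |A - B| ≤ 4 * (q * η) := by
    have h1 : |B + w + v| ≤ 3 * η := by rw [abs_le]; constructor <;> linarith
    have h2 : |A| ≤ q * (3 * η) := by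
      rw [hAe, abs_mul, abs_of_pos he0]
      exact mul_le_mul heq h1 (abs_nonneg _) hq0.le
    have h3 : η ≤ q * η := le_mul_of_one_le_left hη0.le (by linarith)
    have h4 := abs_sub A B
    rw [abs_of_nonneg hB0] at h4
    linarith
  have hz2 : (A - B)^2 ≤ 16 * δ := by
    rw [← sq_abs, ← hqη]
    have := pow_le_pow_left₀ (abs_nonneg _) hzb 2
    linarith
  have hz : |A - B| ≤ 1/2 := by
    have : (A-B)^2 ≤ (1/2)^2 := by linarith
    exact abs_le_of_sq_le_sq this (by norm_num)
  have hfin := aux_final (A - B) G (16 * δ) hz hz2 (by linarith)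
  refine ⟨Real.exp (A - B + G) / (1 + (A - B)) - 1, ?_, ?_⟩
  · rw [hphi, hpow]
    have hpos : 0 < 1 + (A - B) := by have := (abs_le.1 hz).1; linarith
    have e1 : Real.exp (-x - e) * (1 + A - B) * (1 + (Real.exp (A - B + G) / (1 + (A - B)) - 1)) =
        Real.exp (-x - e) * Real.exp (A - B + G) := by
      have : 1 + A - B = 1 + (A - B) := by ring
      rw [this]; field_simp; ring
    rw [e1, ← Real.exp_add (-x - e)]
    have e2 : -x - e + (A - B + G) = -x + -B + (-(e * m) + F) := by
      rw [hG, hAe]; ring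
    rw [e2, Real.exp_add (-x + -B), Real.exp_add (-x)]
  · linarith

/-- Precise asymptotics of the density
`f_n(x) = n a_n⁻¹ φ(a_n + (x - c_n)/a_n) Φ(a_n + (x - c_n)/a_n)^{n-1}`
of `Y_n = a_n (X_{(n)} - b_n)` (with `b_n = a_n - c_n/a_n`), uniformly on
`x ∈ [-(1/4) log log n, (log n)^{1/4}]`, with relative error
`O(t_n(x)⁴/(log n)^{3/2})` (interpreted as at least `(log n)^{-3/2}`). -/
theorem density_asymptotic :
    ∃ C > (0 : ℝ), ∃ N : ℕ, ∀ n ≥ N,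
      ∀ x ∈ Set.Icc (-(1 / 4) * Real.log (Real.log n)) ((Real.log n) ^ ((1 : ℝ) / 4)),
        ∃ r : ℝ,
          (n : ℝ) * (aSeq n)⁻¹ * stdNormalPDF (aSeq n + (x - cSeq n) / aSeq n) *
              stdNormalCDF (aSeq n + (x - cSeq n) / aSeq n) ^ (n - 1) =
            Real.exp (-x - Real.exp (-x)) *
              (1 + Real.exp (-x) * ((x - cSeq n) ^ 2 + 2 * (x - cSeq n) + 2) / (4 * Real.log n)
                - (x - cSeq n) ^ 2 / (4 * Real.log n)) * (1 + r) ∧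
          |r| ≤ C * max ((x - cSeq n) ^ 4 / (Real.log n) ^ ((3 : ℝ) / 2))
                      ((Real.log n) ^ ((3 : ℝ) / 2))⁻¹ := by
  refine ⟨1000, by norm_num, ⌈Real.exp (100^4)⌉₊, ?_⟩
  intro n hn x hx
  have hn' : Real.exp (100^4) ≤ n := (Nat.le_ceil _).trans (by exact_mod_cast hn)
  have hn0 : (0:ℝ) < n := (Real.exp_pos _).trans_le hn'
  have hL : (100:ℝ)^4 ≤ Real.log n := (Real.le_log_iff_exp_le hn0).2 hn'
  have hL0 : 0 < Real.log n := lt_of_lt_of_le (by norm_num) hL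
  set q := Real.log n ^ ((1:ℝ)/4) with hqd
  have hq0 : 0 < q := by positivity
  have hq4 : q^4 = Real.log n := by
    rw [hqd, ← Real.rpow_natCast, ← Real.rpow_mul hL0.le]; norm_num
  have hq6 : Real.log n ^ ((3:ℝ)/2) = q^6 := by
    rw [hqd, ← Real.rpow_natCast, ← Real.rpow_mul hL0.le]; norm_num
  have hq : 100 ≤ q := by
    rw [← hq4] at hL
    exact le_of_pow_le_pow_left₀ (by norm_num) hq0.le hL
  have hlog : Real.log (Real.log n) = 4 * Real.log q := by
    rw [← hq4, Real.log_pow]; norm_num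
  have hn1 : 1 ≤ n := by exact_mod_cast hn0
  have ha : 0 < aSeq n := by unfold aSeq; positivity
  have ha2 : aSeq n ^ 2 = 2 * q^4 := by
    unfold aSeq; rw [Real.sq_sqrt (by positivity), hq4]
  have hpos : 0 < Real.sqrt (4 * Real.pi * Real.log n) := by positivity
  have hc : Real.exp (cSeq n) = aSeq n * Real.sqrt (2 * Real.pi) := by
    unfold cSeq aSeq
    rw [Real.exp_log hpos, ← Real.sqrt_mul (by positivity)]; congr 1; ring
  have hpi := Real.pi_gt_three
  have hpi4 := Real.pi_le_four
  have hc0 : 0 ≤ cSeq n := by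
    unfold cSeq
    apply Real.log_nonneg
    rw [Real.one_le_sqrt]
    nlinarith
  have hcq : cSeq n ≤ q := by
    unfold cSeq
    rw [Real.log_le_iff_le_exp hpos]
    have h := Real.pow_div_factorial_le_exp q hq0.le 3
    refine le_trans ?_ h
    apply Real.sqrt_le_iff.2
    refine ⟨by positivity, ?_⟩
    rw [← hq4]
    simp only [Nat.factorial]
    have h1 : q^4 * 10000 ≤ q^4 * q^2 := by gcongr; nlinarith
    norm_num
    have h2 : Real.pi * q^4 ≤ 4 * q^4 := by gcongr
    nlinarith
  rw [hlog] at hx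
  obtain ⟨r, h1, h2⟩ := aux_core n hn1 q x (cSeq n) (aSeq n) _ _ hq
    (by rw [hq4, Real.exp_log hn0]) hc0 hcq hc ha ha2 (by linarith [hx.1]) hx.2 rfl rfl
  refine ⟨r, ?_, h2.trans ?_⟩
  · rw [← hq4]; exact h1
  · rw [hq6]
    gcongr
    rcases max_cases 1 |x - cSeq n| with ⟨h, _⟩ | ⟨h, _⟩
    · rw [h, one_pow, one_div]; exact le_max_right _ _
    · rw [h, Even.pow_abs (by decide)]; exact le_max_left _ _
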